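/- Let G be a finite simple graph with no isolated vertices and positive edge weights σ, let Γ_ec be the family of edge covers of G and Γ_fec the family of fractional edge covers of G. Then (3/4)·Mod_{∞,σ}(Γ_fec) ≤ Mod_{∞,σ}(Γ_ec) ≤ Mod_{∞,σ}(Γ_fec), where Mod_{∞,σ}(Γ) is the infimum over admissible densities ρ of the ∞-energy max_{e∈E} σ(e)ρ(e). -/

import Mathlib

open Finset

noncomputable section
open scoped Classical

variable {V : Type*}

/-- The set of admissible densities for a family `Γ` of objects on the edge set of `G`.
Densities are elements of `ℝ^E_{≥0}`, modeled as nonnegative functions on `Sym2 V`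
vanishing outside the edge set of `G`. `ρ` is admissible if `ℓ_ρ(γ) ≥ 1` for all `γ ∈ Γ`. -/
def Adm [Fintype V] [DecidableEq V] (G : SimpleGraph V) (Γ : Set (Sym2 V → ℝ)) :
    Set (Sym2 V → ℝ) :=
  {ρ | (∀ e, 0 ≤ ρ e) ∧ (∀ e ∉ G.edgeSet, ρ e = 0) ∧
    ∀ γ ∈ Γ, 1 ≤ ∑ e ∈ G.edgeFinset, γ e * ρ e}

/-- The `p`-energy of a density `ρ` with edge weights `σ`: `Σ_e σ(e) ρ(e)^p`. -/
def energy [Fintype V] [DecidableEq V] (p : ℝ) (σ : Sym2 V → ℝ) (G : SimpleGraph V)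
    (ρ : Sym2 V → ℝ) : ℝ :=
  ∑ e ∈ G.edgeFinset, σ e * ρ e ^ p

/-- The `p`-modulus of a family `Γ` with edge weights `σ`:
the infimum of the `p`-energy over admissible densities. -/
def Modulus [Fintype V] [DecidableEq V] (p : ℝ) (σ : Sym2 V → ℝ) (G : SimpleGraph V)
    (Γ : Set (Sym2 V → ℝ)) : ℝ :=
  sInf (energy p σ G '' Adm G Γ)

/-- The unweighted 2-energy `Σ_e ρ(e)²`. -/
def energy2 [Fintype V] [DecidableEq V] (G : SimpleGraph V) (ρ : Sym2 V → ℝ) : ℝ :=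
  ∑ e ∈ G.edgeFinset, ρ e ^ 2

/-- The unweighted 2-modulus. -/
def Mod2 [Fintype V] [DecidableEq V] (G : SimpleGraph V) (Γ : Set (Sym2 V → ℝ)) : ℝ :=
  sInf (energy2 G '' Adm G Γ)

/-- `C` is an edge cover of `G`: a set of edges of `G` meeting every vertex. -/
def IsEdgeCover [Fintype V] [DecidableEq V] (G : SimpleGraph V) (C : Finset (Sym2 V)) : Prop :=
  ↑C ⊆ G.edgeSet ∧ ∀ v : V, ∃ e ∈ C, v ∈ e

/-- The family `Γ_ec` of indicator vectors of edge covers of `G`. -/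
def Γec [Fintype V] [DecidableEq V] (G : SimpleGraph V) : Set (Sym2 V → ℝ) :=
  {γ | ∃ C : Finset (Sym2 V), IsEdgeCover G C ∧ γ = fun e => if e ∈ C then 1 else 0}

/-- The family `Γ_fec` of fractional edge covers of `G`: nonnegative vectors on the edge
set with `Σ_{e ∈ δ(v)} γ(e) ≥ 1` at every vertex `v`. -/
def Γfec [Fintype V] [DecidableEq V] (G : SimpleGraph V) : Set (Sym2 V → ℝ) :=
  {γ | (∀ e, 0 ≤ γ e) ∧ (∀ e ∉ G.edgeSet, γ e = 0) ∧
    ∀ v : V, 1 ≤ ∑ e ∈ G.incidenceFinset v, γ e}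

/-- The family `Γ_star` of indicator vectors of the stars `δ(v)`, `v ∈ V`. -/
def Γstar [Fintype V] [DecidableEq V] (G : SimpleGraph V) : Set (Sym2 V → ℝ) :=
  {γ | ∃ v : V, γ = fun e => if e ∈ G.incidenceFinset v then 1 else 0}

/-- The subgraph of `G` whose edge set is the support `{e : γ(e) > 0}` of `γ`. -/
def suppGraph (G : SimpleGraph V) (γ : Sym2 V → ℝ) : SimpleGraph V where
  Adj u v := G.Adj u v ∧ 0 < γ s(u, v)
  symm := by
    constructor
    intro u v h
    refine ⟨h.1.symm, ?_⟩
    rw [Sym2.eq_swap]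
    exact h.2
  loopless := ⟨fun v h => G.loopless.irrefl v h.1⟩

/-- The `∞`-energy of a density `ρ` with weights `σ`: `max_{e ∈ E} σ(e) ρ(e)`. -/
def energyInf [Fintype V] [DecidableEq V] (σ : Sym2 V → ℝ) (G : SimpleGraph V)
    (hE : G.edgeFinset.Nonempty) (ρ : Sym2 V → ℝ) : ℝ :=
  G.edgeFinset.sup' hE fun e => σ e * ρ e

/-- The `∞`-modulus of a family `Γ` with weights `σ`. -/
def ModulusInf [Fintype V] [DecidableEq V] (σ : Sym2 V → ℝ) (G : SimpleGraph V)
    (hE : G.edgeFinset.Nonempty) (Γ : Set (Sym2 V → ℝ)) : ℝ :=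
  sInf (energyInf σ G hE '' Adm G Γ)

lemma aux_color [Fintype V] (π : Equiv.Perm V) (S : Finset V) :
    ∃ c : V → Fin 3, ∀ u ∈ S, π u ∈ S → π u ≠ u → c u ≠ c (π u) := by
  induction S using Finset.induction_on with
  | empty => exact ⟨fun _ => 0, by simp⟩
  | insert a S ha ih =>
    obtain ⟨c, hc⟩ := ih
    obtain ⟨x, hx1, hx2⟩ : ∃ x : Fin 3, x ≠ c (π a) ∧ x ≠ c (π.symm a) := by
      generalize c (π a) = p
      generalize c (π.symm a) = q
      revert p q
      decide
    refine ⟨Function.update c a x, ?_⟩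
    intro u hu hpu hne
    by_cases h1 : u = a
    · subst h1
      rw [Function.update_self, Function.update_of_ne hne]
      exact hx1
    · by_cases h2 : π u = a
      · rw [h2, Function.update_self, Function.update_of_ne h1]
        have : u = π.symm a := by rw [← h2]; simp
        rw [this]
        exact hx2.symm
      · rw [Function.update_of_ne h1, Function.update_of_ne h2]
        exact hc u (by simpa [h1] using hu) (by simpa [h2] using hpu) hne

lemma aux_birkhoff [Fintype V] (M c : V → V → ℝ) (R : ℝ)
    (h0 : ∀ u v, 0 ≤ M u v) (hsymm : ∀ u v, M u v = M v u) (hrow : ∀ u, ∑ v, M u v = 1)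
    (hR : ∑ u, ∑ v, c u v * M u v ≤ R) :
    ∃ π : Equiv.Perm V, (∀ u, 0 < M u (π u)) ∧ ∑ u, c u (π u) ≤ R := by
  have hM : (Matrix.of M) ∈ doublyStochastic ℝ V := by
    rw [mem_doublyStochastic_iff_sum]
    refine ⟨h0, hrow, fun j => ?_⟩
    rw [← hrow j]
    exact Finset.sum_congr rfl fun i _ => hsymm i j
  obtain ⟨w, hw0, hw1, hwM⟩ := exists_eq_sum_perm_of_mem_doublyStochastic hM
  have hent : ∀ u v, M u v = ∑ π : Equiv.Perm V, w π * (if π u = v then 1 else 0) := by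
    intro u v
    have := congrFun (congrFun hwM u) v
    simp only [Matrix.sum_apply, Matrix.smul_apply, Matrix.of_apply] at this
    rw [← this]
    refine Finset.sum_congr rfl fun π _ => ?_
    simp [PEquiv.toMatrix_apply, Equiv.toPEquiv_apply, eq_comm]
  have hcost : ∑ u, ∑ v, c u v * M u v = ∑ π : Equiv.Perm V, w π * ∑ u, c u (π u) := by
    simp_rw [hent, Finset.mul_sum]
    rw [Finset.sum_congr rfl fun u _ => Finset.sum_comm, Finset.sum_comm]
    refine Finset.sum_congr rfl fun π _ => Finset.sum_congr rfl fun u _ => ?_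
    rw [Finset.sum_eq_single (π u)]
    · simp; ring
    · intro b _ hb
      simp [hb.symm]
    · simp
  by_contra hcon
  push Not at hcon
  have hpos : ∀ π : Equiv.Perm V, 0 < w π → R < ∑ u, c u (π u) := by
    intro π hπ
    refine hcon π fun u => ?_
    rw [hent]
    refine lt_of_lt_of_le hπ ?_
    have := Finset.single_le_sum (f := fun τ : Equiv.Perm V => w τ * (if τ u = π u then (1:ℝ) else 0))
      (fun τ _ => mul_nonneg (hw0 τ) (by split_ifs <;> norm_num)) (Finset.mem_univ π)
    simpa using this
  have hex : ∃ π, 0 < w π := by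
    by_contra h
    push Not at h
    have : ∑ π, w π ≤ 0 := Finset.sum_nonpos fun π _ => h π
    linarith
  obtain ⟨π0, hπ0⟩ := hex
  have hlt : ∑ π, w π * R < ∑ π : Equiv.Perm V, w π * ∑ u, c u (π u) := by
    refine Finset.sum_lt_sum (fun π _ => ?_) ⟨π0, Finset.mem_univ _, ?_⟩
    · rcases (hw0 π).eq_or_lt with h | h
      · simp [← h]
      · exact mul_le_mul_of_nonneg_left (hpos π h).le h.le
    · exact mul_lt_mul_of_pos_left (hpos π0 hπ0) hπ0
  rw [← Finset.sum_mul, hw1, one_mul, ← hcost] at hlt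
  linarith

lemma aux_matrix [Fintype V] (a w : V → V → ℝ) (μ : V → ℝ)
    (ha0 : ∀ u v, 0 ≤ a u v) (has : ∀ u v, a u v = a v u) (had : ∀ u, a u u = 0)
    (har : ∀ u, 1 ≤ ∑ v, a u v)
    (hw0 : ∀ u v, 0 ≤ w u v) (hws : ∀ u v, w u v = w v u)
    (hμ : ∀ u v, a u v * μ u ≤ a u v * w u v) :
    ∃ π : Equiv.Perm V, (∀ u, π u = u ∨ 0 < a u (π u)) ∧
      ∑ u, (if u = π u then μ u else w u (π u) / 2) ≤ (∑ u, ∑ v, a u v * w u v) / 2 := by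
  set s : V → ℝ := fun u => ∑ v, a u v with hs
  have hs1 : ∀ u, 1 ≤ s u := har
  have hs0 : ∀ u, 0 < s u := fun u => lt_of_lt_of_le one_pos (hs1 u)
  set x : V → V → ℝ := fun u v => a u v * (max (s u) (s v))⁻¹ with hx
  have hmax : ∀ u v, 0 < max (s u) (s v) := fun u v => lt_max_of_lt_left (hs0 u)
  have hx0 : ∀ u v, 0 ≤ x u v := fun u v => mul_nonneg (ha0 u v) (inv_nonneg.2 (hmax u v).le)
  have hxs : ∀ u v, x u v = x v u := by
    intro u v
    simp only [hx]
    rw [has, max_comm]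
  have hxle : ∀ u v, x u v ≤ a u v * (s u)⁻¹ := fun u v =>
    mul_le_mul_of_nonneg_left (inv_anti₀ (hs0 u) (le_max_left _ _)) (ha0 u v)
  have hone : ∀ u, ∑ v, a u v * (s u)⁻¹ = 1 := by
    intro u
    rw [← Finset.sum_mul]
    exact mul_inv_cancel₀ (hs0 u).ne'
  set d : V → ℝ := fun u => ∑ v, (a u v * (s u)⁻¹ - x u v) with hd
  have hd0 : ∀ u, 0 ≤ d u := fun u => Finset.sum_nonneg fun v _ => sub_nonneg.2 (hxle u v)
  have hdx : ∀ u, d u + ∑ v, x u v = 1 := by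
    intro u
    simp only [hd]
    rw [Finset.sum_sub_distrib, hone]
    ring
  have hxd : ∀ u, x u u = 0 := fun u => by simp [hx, had]
  have key := aux_birkhoff (fun u v => x u v + if u = v then d u else 0)
    (fun u v => if u = v then μ u else w u v / 2) ((∑ u, ∑ v, a u v * w u v) / 2)
    (fun u v => by
      have := hx0 u v
      have := hd0 u
      split_ifs <;> linarith)
    (fun u v => by
      rw [hxs]
      by_cases h : u = v
      · subst h; rfl
      · rw [if_neg h, if_neg (Ne.symm h)])
    (fun u => by
      rw [Finset.sum_add_distrib]
      have := hdx u
      simp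
      linarith)
    (by
      have h1 : ∀ u, ∑ v, (if u = v then μ u else w u v / 2) * (x u v + if u = v then d u else 0)
          = ∑ v, x u v * w u v / 2 + d u * μ u := by
        intro u
        have : ∀ v, (if u = v then μ u else w u v / 2) * (x u v + if u = v then d u else 0)
          = x u v * w u v / 2 + if u = v then d u * μ u else 0 := by
          intro v
          by_cases h : u = v
          · subst h
            simp [hxd]
            ring
          · simp [h]
            ring
        simp_rw [this]
        rw [Finset.sum_add_distrib]
        simp
      have h2 : ∀ u, d u * μ u ≤ ∑ v, (a u v * (s u)⁻¹ - x u v) * w u v := by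
        intro u
        simp only [hd]
        rw [Finset.sum_mul]
        refine Finset.sum_le_sum fun v _ => ?_
        have e : a u v * (s u)⁻¹ - x u v = a u v * ((s u)⁻¹ - (max (s u) (s v))⁻¹) := by
          simp only [hx]; ring
        have hk : 0 ≤ (s u)⁻¹ - (max (s u) (s v))⁻¹ :=
          sub_nonneg.2 (inv_anti₀ (hs0 u) (le_max_left _ _))
        rw [e]
        have := mul_le_mul_of_nonneg_right (hμ u v) hk
        nlinarith
      have h3 : ∑ u, ∑ v, (if u = v then μ u else w u v / 2) * (x u v + if u = v then d u else 0)
          ≤ ∑ u, ∑ v, (a u v * w u v) * ((s u)⁻¹ - (max (s u) (s v))⁻¹ / 2) := by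
        refine Finset.sum_le_sum fun u _ => ?_
        rw [h1]
        refine (add_le_add_right (h2 u) _).trans ?_
        rw [← Finset.sum_add_distrib]
        refine Finset.sum_le_sum fun v _ => ?_
        simp only [hx]
        apply le_of_eq
        ring
      refine h3.trans ?_
      have h4 : ∑ u, ∑ v, (a u v * w u v) * ((s u)⁻¹ - (max (s u) (s v))⁻¹ / 2)
          = ∑ u, ∑ v, (a u v * w u v) * ((s v)⁻¹ - (max (s u) (s v))⁻¹ / 2) := by
        rw [Finset.sum_comm]
        refine Finset.sum_congr rfl fun v _ => Finset.sum_congr rfl fun u _ => ?_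
        rw [has, hws, max_comm]
      have h5 : ∑ u, ∑ v, (a u v * w u v) * ((s u)⁻¹ - (max (s u) (s v))⁻¹ / 2)
          + ∑ u, ∑ v, (a u v * w u v) * ((s v)⁻¹ - (max (s u) (s v))⁻¹ / 2)
          ≤ ∑ u, ∑ v, a u v * w u v := by
        rw [← Finset.sum_add_distrib]
        refine Finset.sum_le_sum fun u _ => ?_
        rw [← Finset.sum_add_distrib]
        refine Finset.sum_le_sum fun v _ => ?_
        have hk : (s u)⁻¹ + (s v)⁻¹ - (max (s u) (s v))⁻¹ ≤ 1 := by
          have := inv_le_one_of_one_le₀ (hs1 u)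
          have := inv_le_one_of_one_le₀ (hs1 v)
          rcases le_total (s u) (s v) with h | h
          · rw [max_eq_right h]; linarith
          · rw [max_eq_left h]; linarith
        have := mul_le_mul_of_nonneg_left hk (mul_nonneg (ha0 u v) (hw0 u v))
        nlinarith
      linarith)
  obtain ⟨π, hπ1, hπ2⟩ := key
  refine ⟨π, fun u => ?_, hπ2⟩
  by_cases h : π u = u
  · exact Or.inl h
  · right
    have := hπ1 u
    simp only [if_neg (Ne.symm h), add_zero] at this
    by_contra hn
    have : a u (π u) = 0 := le_antisymm (not_lt.1 hn) (ha0 _ _)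
    have hxz : x u (π u) = 0 := by simp only [hx]; rw [this, zero_mul]
    linarith

lemma aux_inc_sum [Fintype V] [DecidableEq V] (G : SimpleGraph V) (f : Sym2 V → ℝ)
    (hf : ∀ e ∉ G.edgeSet, f e = 0) (v : V) :
    ∑ e ∈ G.incidenceFinset v, f e = ∑ u, f s(v, u) := by
  symm
  rw [← Finset.sum_filter_add_sum_filter_not Finset.univ (fun u => G.Adj v u)]
  rw [Finset.sum_eq_zero (s := Finset.univ.filter fun u => ¬ G.Adj v u), add_zero]
  · refine Finset.sum_bij (fun u _ => s(v, u)) ?_ ?_ ?_ ?_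
    · intro u hu
      simp only [Finset.mem_filter, Finset.mem_univ, true_and] at hu
      rw [SimpleGraph.mem_incidenceFinset]
      exact ⟨hu, by simp⟩
    · intro u _ u' _ h
      exact Sym2.congr_right.1 h
    · intro e he
      rw [SimpleGraph.mem_incidenceFinset] at he
      obtain ⟨he1, he2⟩ := he
      obtain ⟨u, rfl⟩ := he2
      exact ⟨u, by simpa using he1, rfl⟩
    · intros; rfl
  · intro u hu
    apply hf
    simpa using hu

lemma aux_edge_sum [Fintype V] [DecidableEq V] (G : SimpleGraph V) (f : Sym2 V → ℝ)
    (hf : ∀ e ∉ G.edgeSet, f e = 0) :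
    ∑ u, ∑ v, f s(u, v) = 2 * ∑ e ∈ G.edgeFinset, f e := by
  simp_rw [← aux_inc_sum G f hf]
  have : ∀ v, ∑ e ∈ G.incidenceFinset v, f e
      = ∑ e ∈ G.edgeFinset, if v ∈ e then f e else 0 := by
    intro v
    rw [← Finset.sum_filter]
    refine Finset.sum_congr ?_ fun _ _ => rfl
    ext e
    simp [SimpleGraph.mem_incidenceFinset, SimpleGraph.incidenceSet]
  simp_rw [this]
  rw [Finset.sum_comm, Finset.mul_sum]
  refine Finset.sum_congr rfl fun e he => ?_
  rw [← Finset.sum_filter]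
  have hcard : (Finset.univ.filter fun v => v ∈ e) = e.toFinset := by
    ext v; simp
  rw [hcard, Finset.sum_const, Sym2.card_toFinset_of_not_isDiag]
  · simp
  · exact G.not_isDiag_of_mem_edgeSet (by simpa using he)

lemma aux_cover [Fintype V] [DecidableEq V] (G : SimpleGraph V)
    (hiso : ∀ v : V, ∃ u, G.Adj v u) (ρ γ : Sym2 V → ℝ) (hρ : ∀ e, 0 ≤ ρ e) (hγ : γ ∈ Γfec G) :
    ∃ C : Finset (Sym2 V), IsEdgeCover G C ∧
      ∑ e ∈ C, ρ e ≤ (4 / 3) * ∑ e ∈ G.edgeFinset, γ e * ρ e := by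
  obtain ⟨hγ0, hγE, hγ1⟩ := hγ
  have hm : ∀ v, ∃ m, G.Adj v m ∧ ∀ u, G.Adj v u → ρ s(v, m) ≤ ρ s(v, u) := by
    intro v
    obtain ⟨u0, hu0⟩ := hiso v
    obtain ⟨m, hm, hmin⟩ := Finset.exists_min_image (Finset.univ.filter fun u => G.Adj v u)
      (fun u => ρ s(v, u)) ⟨u0, by simpa using hu0⟩
    exact ⟨m, by simpa using hm, fun u hu => hmin u (by simpa using hu)⟩
  choose m hmadj hmmin using hm
  have hadj : ∀ u v, 0 < γ s(u, v) → G.Adj u v := by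
    intro u v h
    by_contra hn
    exact h.ne' (hγE _ (by simpa using hn))
  obtain ⟨π, hπ, hcost⟩ := aux_matrix (fun u v => γ s(u, v)) (fun u v => ρ s(u, v))
    (fun u => ρ s(u, m u)) (fun _ _ => hγ0 _) (fun u v => by rw [Sym2.eq_swap])
    (fun u => hγE _ (by simp)) (fun u => by rw [← aux_inc_sum G γ hγE]; exact hγ1 u)
    (fun _ _ => hρ _) (fun u v => by rw [Sym2.eq_swap])
    (fun u v => by
      rcases (hγ0 s(u, v)).eq_or_lt with h | h
      · simp [← h]
      · exact mul_le_mul_of_nonneg_left (hmmin u v (hadj u v h)) h.le)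
  rw [aux_edge_sum G (fun e => γ e * ρ e) (fun e he => by simp [hγE e he])] at hcost
  obtain ⟨c, hc⟩ := aux_color π Finset.univ
  set edge : V → Sym2 V := fun u => if u = π u then s(u, m u) else s(u, π u) with hedge
  set P : Fin 3 → Finset V := fun i => Finset.univ.filter fun u => u = π u ∨ c u ≠ i with hP
  set C : Fin 3 → Finset (Sym2 V) := fun i => (P i).image edge with hC
  have hcov : ∀ i, IsEdgeCover G (C i) := by
    intro i
    constructor
    · intro e he
      simp only [hC, Finset.coe_image, Set.mem_image] at he
      obtain ⟨u, _, rfl⟩ := he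
      simp only [hedge]
      split_ifs with h
      · exact hmadj u
      · exact hadj _ _ ((hπ u).resolve_left (Ne.symm h))
    · intro v
      by_cases hv : v = π v ∨ c v ≠ i
      · refine ⟨edge v, Finset.mem_image_of_mem _ (by simpa [hP] using hv), ?_⟩
        simp only [hedge]
        split_ifs <;> simp
      · push Not at hv
        have h1 : π (π.symm v) = v := by simp
        have hne : π.symm v ≠ π (π.symm v) := by
          rw [h1]
          intro h
          apply hv.1
          rw [h] at h1
          exact h1.symm
        have h2 := hc (π.symm v) (Finset.mem_univ _) (Finset.mem_univ _) hne.symm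
        rw [h1, hv.2] at h2
        refine ⟨edge (π.symm v), Finset.mem_image_of_mem _ ?_, ?_⟩
        · simp only [hP, Finset.mem_filter, Finset.mem_univ, true_and]
          exact Or.inr h2
        · simp only [hedge]
          rw [if_neg hne, h1]
          simp
  have hCle : ∀ i, ∑ e ∈ C i, ρ e ≤ ∑ u, if u = π u ∨ c u ≠ i then ρ (edge u) else 0 := by
    intro i
    rw [← Finset.sum_filter]
    exact Finset.sum_image_le_of_nonneg fun _ _ => hρ _
  have htot : ∑ i, ∑ e ∈ C i, ρ e ≤ 4 * ∑ u, (if u = π u then ρ s(u, m u) else ρ s(u, π u) / 2) := by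
    refine (Finset.sum_le_sum fun i _ => hCle i).trans ?_
    rw [Finset.sum_comm, Finset.mul_sum]
    refine Finset.sum_le_sum fun u _ => ?_
    by_cases h : u = π u
    · have := hρ s(u, m u)
      simp only [hedge, if_pos h]
      simp only [h.symm, true_or, if_true]
      simp
      linarith
    · simp only [hedge, if_neg h]
      simp only [h, false_or]
      generalize c u = k
      apply le_of_eq
      rw [Fin.sum_univ_three]
      fin_cases k <;> simp <;> ring
  have hcost' : ∑ u, (if u = π u then ρ s(u, m u) else ρ s(u, π u) / 2)
      ≤ (2 * ∑ e ∈ G.edgeFinset, γ e * ρ e) / 2 := by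
    convert hcost
  by_contra hcon
  push Not at hcon
  have h0 := hcon (C 0) (hcov 0)
  have h1 := hcon (C 1) (hcov 1)
  have h2 := hcon (C 2) (hcov 2)
  rw [Fin.sum_univ_three] at htot
  linarith

lemma aux_ec_sub [Fintype V] [DecidableEq V] (G : SimpleGraph V) : Γec G ⊆ Γfec G := by
  rintro γ ⟨C, ⟨hCE, hC⟩, rfl⟩
  refine ⟨fun e => by dsimp only; split_ifs <;> norm_num, fun e he => ?_, fun v => ?_⟩
  · exact if_neg fun h => he (hCE h)
  · obtain ⟨e, he, hv⟩ := hC v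
    have := Finset.single_le_sum (f := fun e => if e ∈ C then (1:ℝ) else 0)
      (s := G.incidenceFinset v) (fun e _ => by split_ifs <;> norm_num)
      (a := e) (by rw [SimpleGraph.mem_incidenceFinset]; exact ⟨hCE he, hv⟩)
    simpa [he] using this

/-- `(3/4) Mod_{∞,σ}(Γ_fec) ≤ Mod_{∞,σ}(Γ_ec) ≤ Mod_{∞,σ}(Γ_fec)`. -/
theorem modInf_ec_fec_bounds [Fintype V] [DecidableEq V] (G : SimpleGraph V)
    (hiso : ∀ v : V, ∃ u, G.Adj v u) (hE : G.edgeFinset.Nonempty)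
    (σ : Sym2 V → ℝ) (hσ : ∀ e, 0 < σ e) :
    (3 / 4 : ℝ) * ModulusInf σ G hE (Γfec G) ≤ ModulusInf σ G hE (Γec G) ∧
    ModulusInf σ G hE (Γec G) ≤ ModulusInf σ G hE (Γfec G) := by
  have hsub : Adm G (Γfec G) ⊆ Adm G (Γec G) := fun ρ h =>
    ⟨h.1, h.2.1, fun γ hγ => h.2.2 γ (aux_ec_sub G hγ)⟩
  have hbdd : ∀ Γ, BddBelow (energyInf σ G hE '' Adm G Γ) := by
    intro Γ
    refine ⟨0, ?_⟩
    rintro _ ⟨ρ, hρ, rfl⟩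
    obtain ⟨e, he⟩ := hE
    exact (mul_nonneg (hσ e).le (hρ.1 e)).trans
      (Finset.le_sup' (fun e => σ e * ρ e) he)
  have hne : (Adm G (Γfec G)).Nonempty := by
    refine ⟨fun e => if e ∈ G.edgeSet then 1 else 0, fun e => by dsimp only; split_ifs <;> norm_num,
      fun e he => if_neg he, ?_⟩
    rintro γ ⟨h0, hz, h1⟩
    obtain ⟨e, he⟩ := hE
    induction e using Sym2.ind with
    | _ v u =>
    refine (h1 v).trans ?_
    have h2 : ∑ e ∈ G.edgeFinset, γ e * (if e ∈ G.edgeSet then (1:ℝ) else 0)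
        = ∑ e ∈ G.edgeFinset, γ e := by
      refine Finset.sum_congr rfl fun e he => ?_
      rw [if_pos (by simpa using he), mul_one]
    rw [h2]
    exact Finset.sum_le_sum_of_subset_of_nonneg (G.incidenceFinset_subset v) fun e _ _ => h0 e
  constructor
  · refine le_csInf ((hne.mono hsub).image _) ?_
    rintro _ ⟨ρ, hρ, rfl⟩
    have hmem : (fun e => 4 / 3 * ρ e) ∈ Adm G (Γfec G) := by
      refine ⟨fun e => mul_nonneg (by norm_num) (hρ.1 e), fun e he => by simp [hρ.2.1 e he], ?_⟩
      intro γ hγ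
      obtain ⟨C, hC, hle⟩ := aux_cover G hiso ρ γ hρ.1 hγ
      have h1 := hρ.2.2 _ ⟨C, hC, rfl⟩
      have h2 : ∑ e ∈ G.edgeFinset, (if e ∈ C then (1:ℝ) else 0) * ρ e = ∑ e ∈ C, ρ e := by
        simp only [ite_mul, one_mul, zero_mul]
        rw [← Finset.sum_filter]
        refine Finset.sum_congr ?_ fun _ _ => rfl
        ext e
        have : e ∈ C → e ∈ G.edgeSet := fun h => hC.1 h
        simpa using this
      have h3 : ∑ e ∈ G.edgeFinset, γ e * (4 / 3 * ρ e)
          = 4 / 3 * ∑ e ∈ G.edgeFinset, γ e * ρ e := by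
        rw [Finset.mul_sum]
        exact Finset.sum_congr rfl fun e _ => by ring
      rw [h3]
      rw [h2] at h1
      linarith
    have h4 : ModulusInf σ G hE (Γfec G) ≤ energyInf σ G hE (fun e => 4 / 3 * ρ e) :=
      csInf_le (hbdd _) ⟨_, hmem, rfl⟩
    have h5 : energyInf σ G hE (fun e => 4 / 3 * ρ e) ≤ 4 / 3 * energyInf σ G hE ρ := by
      refine Finset.sup'_le _ _ fun e he => ?_
      have := Finset.le_sup' (fun e => σ e * ρ e) he
      unfold energyInf
      linarith
    linarith
  · exact csInf_le_csInf (hbdd _) (hne.image _) (Set.image_mono hsub)
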